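/- Let x₊, x₋ : ℝ → ℝ be twice differentiable solutions of ẍ(t) + t²x(t) = 0 with x₊ even, x₋ odd, and Wronskian x₊ẋ₋ − ẋ₊x₋ = 1. For t > 0 define a_±(t) = (t·x_±(t) + i·ẋ_±(t))/√(2t), U(t) = −2i·a₊(t)·a₋(t), and V̄(t) = 2i·Re(conj(a₊(t))·a₋(t)). Then as t → +∞: U(t)·e^{i(t² − π/2)} → −√2·i and V̄(t) → i. -/

import Mathlib

open Real Filter

/-- Instantaneous complex coordinate `a(t) = (t·x(t) + i·ẋ(t))/√(2t)` at frequency `ω = t`. -/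
noncomputable def aInst (f g : ℝ → ℝ) (t : ℝ) : ℂ :=
  ((t * f t : ℝ) + Complex.I * (g t : ℝ)) / ((Real.sqrt (2 * t) : ℝ) : ℂ)


open MeasureTheory

noncomputable def wE (t s : ℝ) : ℂ := Complex.exp (-((1 + Complex.I) * t * s ^ 2 + s ^ 4 / 2))

noncomputable def wM (n : ℕ) (t : ℝ) : ℂ := ∫ s : ℝ, (s : ℂ) ^ n * wE t s

lemma wE_norm (t s : ℝ) : ‖wE t s‖ = Real.exp (-(t * s ^ 2 + s ^ 4 / 2)) := by
  rw [wE, Complex.norm_exp]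
  have : (-((1 + Complex.I) * t * s ^ 2 + s ^ 4 / 2) : ℂ)
      = ((-(t * s ^ 2 + s ^ 4 / 2) : ℝ) : ℂ) + ((-(t * s ^ 2) : ℝ) : ℂ) * Complex.I := by
    push_cast; ring
  rw [this, Complex.add_re, Complex.ofReal_re, Complex.re_ofReal_mul, Complex.I_re, mul_zero, add_zero]

lemma wE_bound (n : ℕ) (R t s : ℝ) (ht : -R ≤ t) :
    ‖(s : ℂ) ^ n * wE t s‖ ≤ Real.exp ((R + 1) ^ 2 / 2) * ‖s ^ n * Real.exp (-1 * s ^ 2)‖ := by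
  rw [norm_mul, norm_mul, wE_norm, norm_pow, norm_pow, Complex.norm_real,
    Real.norm_of_nonneg (Real.exp_pos _).le]
  have : Real.exp (-(t * s ^ 2 + s ^ 4 / 2)) ≤
      Real.exp ((R + 1) ^ 2 / 2) * Real.exp (-1 * s ^ 2) := by
    rw [← Real.exp_add]
    apply Real.exp_le_exp.mpr
    nlinarith [sq_nonneg (s ^ 2 - (R + 1)), mul_nonneg (sq_nonneg s) (by linarith : 0 ≤ t + R)]
  calc _ ≤ ‖s‖ ^ n * (Real.exp ((R + 1) ^ 2 / 2) * Real.exp (-1 * s ^ 2)) := by gcongr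
    _ = _ := by ring

lemma w_gauss_int (n : ℕ) : Integrable (fun s : ℝ => s ^ n * Real.exp (-1 * s ^ 2)) := by
  have h := integrable_rpow_mul_exp_neg_mul_sq (b := 1) one_pos (s := n)
    (by have : (0:ℝ) ≤ n := n.cast_nonneg
        linarith)
  simpa using h

lemma wE_cont (t : ℝ) : Continuous (wE t) := by
  unfold wE; fun_prop

lemma w_int (n : ℕ) (t : ℝ) : Integrable (fun s : ℝ => (s : ℂ) ^ n * wE t s) := by
  refine Integrable.mono' (((w_gauss_int n).norm).const_mul (Real.exp ((-t + 1) ^ 2 / 2))) ?_ ?_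
  · exact (((Complex.continuous_ofReal.pow n).mul (wE_cont t))).aestronglyMeasurable
  · exact Eventually.of_forall fun s => wE_bound n (-t) t s (by simp)

lemma wE_deriv_t (t s : ℝ) : HasDerivAt (fun t => wE t s) (-(1 + Complex.I) * s ^ 2 * wE t s) t := by
  have h1 : HasDerivAt (fun t : ℝ => (t : ℂ)) 1 t := Complex.ofRealCLM.hasDerivAt
  have h2 := ((((h1.const_mul (1 + Complex.I)).mul_const ((s : ℂ) ^ 2)).add_const
    ((s : ℂ) ^ 4 / 2)).fun_neg).cexp
  unfold wE
  convert h2 using 1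
  ring

lemma wE_deriv_s (t s : ℝ) :
    HasDerivAt (fun s : ℝ => (s : ℂ) * wE t s)
      ((s : ℂ) ^ 0 * wE t s - 2 * (1 + Complex.I) * t * ((s : ℂ) ^ 2 * wE t s)
        - 2 * ((s : ℂ) ^ 4 * wE t s)) s := by
  have h1 : HasDerivAt (fun t : ℝ => (t : ℂ)) 1 s := Complex.ofRealCLM.hasDerivAt
  have h2 := (((((h1.fun_pow 2).const_mul ((1 + Complex.I) * t)).fun_add
    ((h1.fun_pow 4).div_const 2))).fun_neg).cexp
  have h3 := h1.fun_mul h2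
  unfold wE
  refine h3.congr_deriv ?_
  push_cast
  ring

lemma wM_deriv (n : ℕ) (t : ℝ) : HasDerivAt (wM n) (-(1 + Complex.I) * wM (n + 2) t) t := by
  have h := (hasDerivAt_integral_of_dominated_loc_of_deriv_le (μ := volume)
    (F := fun t s : ℝ => (s : ℂ) ^ n * wE t s)
    (F' := fun t s : ℝ => -(1 + Complex.I) * ((s : ℂ) ^ (n + 2) * wE t s))
    (x₀ := t) (s := Metric.ball t 1)
    (bound := fun s => ‖-(1 + Complex.I)‖ * (Real.exp (((-t + 1) + 1) ^ 2 / 2) *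
      ‖s ^ (n + 2) * Real.exp (-1 * s ^ 2)‖))
    (Metric.ball_mem_nhds t one_pos)
    (Eventually.of_forall fun u => (w_int n u).aestronglyMeasurable) (w_int n t)
    ((w_int (n + 2) t).const_mul _).aestronglyMeasurable
    (Eventually.of_forall fun s u hu => ?_)
    ((((w_gauss_int (n + 2)).norm).const_mul _).const_mul _)
    (Eventually.of_forall fun s u hu => ?_)).2
  · rw [integral_const_mul] at h
    exact h
  · rw [norm_mul]
    gcongr
    apply wE_bound
    rw [Metric.mem_ball, Real.dist_eq] at hu
    linarith [(abs_lt.mp hu).1]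
  · have := (wE_deriv_t u s).const_mul ((s : ℂ) ^ n)
    exact this.congr_deriv (by ring)

lemma wM_rel (t : ℝ) : wM 0 t - 2 * (1 + Complex.I) * t * wM 2 t - 2 * wM 4 t = 0 := by
  have h := integral_eq_zero_of_hasDerivAt_of_integrable (wE_deriv_s t)
    (((w_int 0 t).sub ((w_int 2 t).const_mul _)).sub ((w_int 4 t).const_mul _))
    (by simpa using w_int 1 t)
  rw [integral_sub, integral_sub, integral_const_mul, integral_const_mul] at h
  · exact h
  · exact w_int 0 t
  · exact (w_int 2 t).const_mul _
  · exact (w_int 0 t).sub ((w_int 2 t).const_mul _)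
  · exact (w_int 4 t).const_mul _

lemma wM2_bound (t : ℝ) (ht : 0 ≤ t) : ‖wM 2 t‖ ≤
    ∫ s : ℝ, Real.exp ((0 + 1) ^ 2 / 2) * ‖s ^ 2 * Real.exp (-1 * s ^ 2)‖ := by
  apply norm_integral_le_of_norm_le (((w_gauss_int 2).norm).const_mul _)
  exact Eventually.of_forall fun s => wE_bound 2 0 t s (by simpa using ht)

lemma wM0_lim : Tendsto (fun t : ℝ => (Real.sqrt t : ℂ) * wM 0 t) atTop
    (nhds (((π : ℂ) / (1 + Complex.I)) ^ (1 / 2 : ℂ))) := by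
  rw [← integral_gaussian_complex (b := 1 + Complex.I) (by simp)]
  have key : ∀ t : ℝ, 0 < t → (Real.sqrt t : ℂ) * wM 0 t =
      ∫ u : ℝ, Complex.exp (-((1 + Complex.I) * u ^ 2 + u ^ 4 / 2 * ((t ^ 2)⁻¹ : ℝ))) := by
    intro t ht
    have hs := Real.sqrt_pos.mpr ht
    have h := Measure.integral_comp_mul_left
      (fun u : ℝ => Complex.exp (-((1 + Complex.I) * u ^ 2 + u ^ 4 / 2 * ((t ^ 2)⁻¹ : ℝ))))
      (Real.sqrt t)
    rw [abs_of_pos (inv_pos.mpr hs)] at h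
    have e : ∀ s : ℝ, Complex.exp (-((1 + Complex.I) * ((Real.sqrt t * s : ℝ) : ℂ) ^ 2 +
        ((Real.sqrt t * s : ℝ) : ℂ) ^ 4 / 2 * ((t ^ 2)⁻¹ : ℝ))) = (s : ℂ) ^ 0 * wE t s := by
      intro s
      have h2 : ((Real.sqrt t : ℝ) : ℂ) ^ 2 = t := by
        rw [← Complex.ofReal_pow, Real.sq_sqrt ht.le]
      have h4 : ((Real.sqrt t : ℝ) : ℂ) ^ 4 = t ^ 2 := by
        rw [← h2]; ring
      have ht' : (t : ℂ) ≠ 0 := by exact_mod_cast ht.ne'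
      rw [pow_zero, one_mul, wE]
      congr 1
      push_cast
      rw [mul_pow, mul_pow, h2, h4]
      field_simp
    simp only [e] at h
    rw [wM, h, Complex.real_smul]
    have : (Real.sqrt t : ℂ) ≠ 0 := by exact_mod_cast hs.ne'
    push_cast
    rw [mul_inv_cancel_left₀ this]
  have hl : Tendsto (fun t : ℝ => ∫ u : ℝ,
      Complex.exp (-((1 + Complex.I) * u ^ 2 + u ^ 4 / 2 * ((t ^ 2)⁻¹ : ℝ)))) atTop
      (nhds (∫ u : ℝ, Complex.exp (-(1 + Complex.I) * u ^ 2))) := by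
    apply tendsto_integral_filter_of_dominated_convergence (fun u => ‖Real.exp (-1 * u ^ 2)‖)
    · exact Eventually.of_forall fun t => Continuous.aestronglyMeasurable (by fun_prop)
    · refine Eventually.of_forall fun t => Eventually.of_forall fun u => ?_
      rw [Complex.norm_exp, Real.norm_of_nonneg (Real.exp_pos _).le]
      have : (-((1 + Complex.I) * u ^ 2 + u ^ 4 / 2 * ((t ^ 2)⁻¹ : ℝ)) : ℂ)
        = ((-(u ^ 2 + u ^ 4 / 2 * (t ^ 2)⁻¹) : ℝ) : ℂ) + ((-(u ^ 2) : ℝ) : ℂ) * Complex.I := by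
        push_cast; ring
      rw [this, Complex.add_re, Complex.ofReal_re, Complex.re_ofReal_mul, Complex.I_re, mul_zero, add_zero]
      apply Real.exp_le_exp.mpr
      have : 0 ≤ u ^ 4 / 2 * (t ^ 2)⁻¹ := by positivity
      linarith
    · exact (integrable_exp_neg_mul_sq one_pos).norm
    · refine Eventually.of_forall fun u => ?_
      have h0 : Tendsto (fun t : ℝ => (((t ^ 2)⁻¹ : ℝ) : ℂ)) atTop (nhds ((0 : ℝ) : ℂ)) :=
        (Complex.continuous_ofReal.tendsto 0).comp
          (tendsto_inv_atTop_zero.comp (tendsto_pow_atTop two_ne_zero))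
      have h1 := ((h0.const_mul ((u : ℂ) ^ 4 / 2)).const_add ((1 + Complex.I) * u ^ 2)).neg.cexp
      convert h1 using 3
      push_cast
      ring
  refine hl.congr' ?_
  filter_upwards [eventually_gt_atTop 0] with t ht
  exact (key t ht).symm

/-- The decaying-type solution `D(t) = e^{-it²/2} M₀(t)`. -/
noncomputable def wD (t : ℝ) : ℂ := Complex.exp (-(Complex.I * t ^ 2 / 2)) * wM 0 t

noncomputable def wD' (t : ℝ) : ℂ := Complex.exp (-(Complex.I * t ^ 2 / 2)) *
  (-(1 + Complex.I) * wM 2 t - Complex.I * t * wM 0 t)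

lemma wPhase_deriv (t : ℝ) : HasDerivAt (fun t : ℝ => Complex.exp (-(Complex.I * t ^ 2 / 2)))
    (-(Complex.I * t) * Complex.exp (-(Complex.I * t ^ 2 / 2))) t := by
  have h1 : HasDerivAt (fun t : ℝ => (t : ℂ)) 1 t := Complex.ofRealCLM.hasDerivAt
  refine ((((h1.fun_pow 2).const_mul Complex.I).div_const 2).fun_neg.cexp).congr_deriv ?_
  push_cast
  ring

lemma wD_deriv (t : ℝ) : HasDerivAt wD (wD' t) t := by
  refine ((wPhase_deriv t).fun_mul (wM_deriv 0 t)).congr_deriv ?_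
  rw [wD']
  ring

lemma wD'_deriv (t : ℝ) : HasDerivAt wD' (-(t ^ 2 * wD t)) t := by
  have h1 : HasDerivAt (fun t : ℝ => (t : ℂ)) 1 t := Complex.ofRealCLM.hasDerivAt
  have h := (wPhase_deriv t).fun_mul (((wM_deriv 2 t).const_mul (-(1 + Complex.I))).fun_sub
    ((h1.const_mul Complex.I).fun_mul (wM_deriv 0 t)))
  refine h.congr_deriv ?_
  rw [wD]
  have hr := wM_rel t
  have hI := Complex.I_sq
  simp only [Nat.reduceAdd]
  generalize Complex.exp (-(Complex.I * t ^ 2 / 2)) = e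
  linear_combination (-Complex.I * e) * hr +
    (e * wM 4 t + e * t ^ 2 * wM 0 t) * hI

/-- The Wronskian of two solutions is constant. -/
lemma w_wronskian (x v : ℝ → ℝ) (hx : ∀ t, HasDerivAt x (v t) t)
    (hv : ∀ t, HasDerivAt v (-(t ^ 2 * x t)) t) (t : ℝ) :
    wD t * v t - wD' t * x t = wD 0 * v 0 - wD' 0 * x 0 := by
  have h : ∀ t : ℝ, HasDerivAt (fun t => wD t * v t - wD' t * x t) 0 t := by
    intro t
    refine (((wD_deriv t).fun_mul (hv t).ofReal_comp).fun_sub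
      ((wD'_deriv t).fun_mul (hx t).ofReal_comp)).congr_deriv ?_
    push_cast
    ring
  exact is_const_of_deriv_eq_zero (fun t => (h t).differentiableAt) (fun t => (h t).deriv) t 0

lemma wM_zero_real (n : ℕ) : ∃ r : ℝ, wM n 0 = r := by
  refine ⟨∫ s : ℝ, s ^ n * Real.exp (-(s ^ 4 / 2)), ?_⟩
  rw [wM, ← integral_complex_ofReal]
  congr 1
  ext s
  simp [wE]

/-- Limits of (rescaled) complex amplitudes. -/
lemma w_limits (xp vp xm vm : ℝ → ℝ)
    (hxp : ∀ t, HasDerivAt xp (vp t) t) (hvp : ∀ t, HasDerivAt vp (-(t ^ 2 * xp t)) t)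
    (hxm : ∀ t, HasDerivAt xm (vm t) t) (hvm : ∀ t, HasDerivAt vm (-(t ^ 2 * xm t)) t)
    (heven : ∀ t, xp (-t) = xp t) (hodd : ∀ t, xm (-t) = -xm t)
    (hW : ∀ t, xp t * vm t - vp t * xm t = 1) :
    ∃ (A B : ℝ) (K : ℂ), K ^ 2 = π / (1 + Complex.I) ∧
      Tendsto (fun t : ℝ => A * (aInst xp vp t * Complex.exp (Complex.I * t ^ 2 / 2))) atTop
        (nhds ((1 + Complex.I) * K / (Real.sqrt 2 : ℂ))) ∧
      Tendsto (fun t : ℝ => B * (aInst xm vm t * Complex.exp (Complex.I * t ^ 2 / 2))) atTop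
        (nhds (Complex.I * K / (Real.sqrt 2 : ℂ))) := by
  obtain ⟨α, hα⟩ := wM_zero_real 0
  obtain ⟨β, hβ⟩ := wM_zero_real 2
  have hxm0 : xm 0 = 0 := by have := hodd 0; rw [neg_zero] at this; linarith
  have hvp0 : vp 0 = 0 := by
    have h1 : HasDerivAt (fun t => xp (-t)) (-(vp 0)) 0 := by
      have := HasDerivAt.scomp (0 : ℝ) (h := fun t : ℝ => -t) (by simpa using hxp 0)
        (hasDerivAt_neg (0 : ℝ))
      simpa [Function.comp_def] using this
    have h2 : (fun t => xp (-t)) = xp := funext heven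
    rw [h2] at h1
    have := h1.unique (hxp 0)
    linarith
  refine ⟨α * vm 0, β * xp 0, (π / (1 + Complex.I)) ^ (1 / 2 : ℂ), ?_, ?_⟩
  · rw [← Complex.cpow_nat_mul]; norm_num
  generalize hK : ((π : ℂ) / (1 + Complex.I)) ^ (1 / 2 : ℂ) = K
  have hKl := wM0_lim
  rw [hK] at hKl
  have hI := Complex.I_sq
  have hWm : ∀ t, wD t * vm t - wD' t * xm t = (α * vm 0 : ℝ) := by
    intro t
    rw [w_wronskian xm vm hxm hvm t, hxm0, wD, hα]; simp
  have hWp : ∀ t, wD t * vp t - wD' t * xp t = (1 + Complex.I) * (β * xp 0 : ℝ) := by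
    intro t
    rw [w_wronskian xp vp hxp hvp t, hvp0, wD', hβ]; simp; ring
  generalize α * vm 0 = A at *
  generalize β * xp 0 = B at *
  have hWc : ∀ t, (xp t * vm t - vp t * xm t : ℂ) = 1 := fun t => by exact_mod_cast hW t
  have hD : ∀ t, wD t = A * xp t - (1 + Complex.I) * B * xm t := by
    intro t
    linear_combination (-wD t) * hWc t + xp t * hWm t - xm t * hWp t
  have hD' : ∀ t, wD' t = A * vp t - (1 + Complex.I) * B * vm t := by
    intro t
    linear_combination (-wD' t) * hWc t + vp t * hWm t - vm t * hWp t
  -- the two basic identities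
  have F1 : ∀ t : ℝ, (A * aInst xp vp t - (1 + Complex.I) * B * aInst xm vm t) *
      Complex.exp (Complex.I * t ^ 2 / 2) =
      (2 * t * wM 0 t + Complex.I * (-(1 + Complex.I) * wM 2 t)) / (Real.sqrt (2 * t) : ℂ) := by
    intro t
    have e : Complex.exp (-(Complex.I * t ^ 2 / 2)) * Complex.exp (Complex.I * t ^ 2 / 2) = 1 := by
      rw [← Complex.exp_add]; simp
    have : (A * aInst xp vp t - (1 + Complex.I) * B * aInst xm vm t) =
        (t * wD t + Complex.I * wD' t) / (Real.sqrt (2 * t) : ℂ) := by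
      rw [hD, hD', aInst, aInst]; push_cast; ring
    rw [this, div_mul_eq_mul_div]
    congr 1
    rw [wD, wD']
    linear_combination (2 * t * wM 0 t + Complex.I * (-(1 + Complex.I) * wM 2 t)) * e -
      Complex.exp (-(Complex.I * t ^ 2 / 2)) * Complex.exp (Complex.I * t ^ 2 / 2) *
      t * wM 0 t * hI
  have F2 : ∀ t : ℝ, (starRingEnd ℂ) (A * aInst xp vp t - (1 - Complex.I) * B * aInst xm vm t) =
      -Complex.I * Complex.exp (-(Complex.I * t ^ 2 / 2)) * (-(1 + Complex.I) * wM 2 t) /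
        (Real.sqrt (2 * t) : ℂ) := by
    intro t
    have : (starRingEnd ℂ) (A * aInst xp vp t - (1 - Complex.I) * B * aInst xm vm t) =
        (t * wD t - Complex.I * wD' t) / (Real.sqrt (2 * t) : ℂ) := by
      rw [hD, hD', aInst, aInst]
      simp only [map_sub, map_mul, map_add, map_div₀, Complex.conj_ofReal, Complex.conj_I, map_one]
      push_cast; ring
    rw [this]
    congr 1
    rw [wD, wD']
    linear_combination (Complex.exp (-(Complex.I * t ^ 2 / 2)) * t * wM 0 t) * hI
  -- remainder tends to zero
  have hexp : ∀ t : ℝ, ‖Complex.exp (Complex.I * t ^ 2 / 2)‖ = 1 := by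
    intro t
    have : Complex.I * t ^ 2 / 2 = ((t ^ 2 / 2 : ℝ) : ℂ) * Complex.I := by push_cast; ring
    rw [this, Complex.norm_exp_ofReal_mul_I]
  have hexpn : ∀ t : ℝ, ‖Complex.exp (-(Complex.I * t ^ 2 / 2))‖ = 1 := by
    intro t
    rw [Complex.exp_neg, norm_inv, hexp, inv_one]
  have hsq : Tendsto (fun t : ℝ => Real.sqrt (2 * t)) atTop atTop :=
    Real.tendsto_sqrt_atTop.comp (tendsto_id.const_mul_atTop two_pos)
  have R : Tendsto (fun t : ℝ => (-(1 + Complex.I) * wM 2 t) / (Real.sqrt (2 * t) : ℂ)) atTop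
      (nhds 0) := by
    set C := ∫ s : ℝ, Real.exp ((0 + 1) ^ 2 / 2) * ‖s ^ 2 * Real.exp (-1 * s ^ 2)‖
    have hz : Tendsto (fun t : ℝ => ‖-(1 + Complex.I)‖ * C / Real.sqrt (2 * t)) atTop (nhds 0) :=
      hsq.const_div_atTop _
    refine squeeze_zero_norm' ?_ hz
    filter_upwards [eventually_ge_atTop 0] with t ht
    rw [norm_div, norm_mul, Complex.norm_real, Real.norm_of_nonneg (Real.sqrt_nonneg _)]
    gcongr
    exact wM2_bound t ht
  have s2 : (Real.sqrt 2 : ℂ) ^ 2 = 2 := by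
    rw [← Complex.ofReal_pow, Real.sq_sqrt two_pos.le]; simp
  have s2' : (Real.sqrt 2 : ℂ) ≠ 0 := by
    intro h; rw [h] at s2; norm_num at s2
  have L1 : Tendsto (fun t : ℝ => (A * aInst xp vp t - (1 + Complex.I) * B * aInst xm vm t) *
      Complex.exp (Complex.I * t ^ 2 / 2)) atTop (nhds (Real.sqrt 2 * K)) := by
    have h := (hKl.const_mul (Real.sqrt 2 : ℂ)).add (R.const_mul Complex.I)
    rw [mul_zero, add_zero] at h
    refine h.congr' ?_
    filter_upwards [eventually_gt_atTop 0] with t ht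
    rw [F1, add_div, mul_div_assoc Complex.I]
    congr 1
    rw [Real.sqrt_mul two_pos.le]
    have h1 : (Real.sqrt t : ℂ) ^ 2 = t := by
      rw [← Complex.ofReal_pow, Real.sq_sqrt ht.le]
    have h2 : (Real.sqrt t : ℂ) ≠ 0 := by
      exact_mod_cast (Real.sqrt_pos.mpr ht).ne'
    push_cast
    field_simp
    rw [s2, h1]
    ring
  have L2 : Tendsto (fun t : ℝ => (A * aInst xp vp t - (1 - Complex.I) * B * aInst xm vm t) *
      Complex.exp (Complex.I * t ^ 2 / 2)) atTop (nhds 0) := by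
    rw [tendsto_zero_iff_norm_tendsto_zero] at R ⊢
    refine R.congr fun t => ?_
    rw [norm_mul, hexp, mul_one, ← RCLike.norm_conj (A * aInst xp vp t - (1 - Complex.I) * B * aInst xm vm t), F2, norm_div, norm_div,
      norm_mul (-Complex.I * _), norm_mul (-Complex.I), hexpn]
    simp
  constructor
  · have h := ((L1.sub L2).const_mul ((1 + Complex.I) / 2)).add L2
    convert h using 2 with t
    · linear_combination (B * aInst xm vm t * Complex.exp (Complex.I * t ^ 2 / 2)) * hI
    · field_simp
      linear_combination (-(1 + Complex.I) * K) * s2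
  · have h := (L1.sub L2).const_mul (Complex.I / 2)
    convert h using 2 with t
    · linear_combination (B * aInst xm vm t * Complex.exp (Complex.I * t ^ 2 / 2)) * hI
    · field_simp
      linear_combination (-K) * s2

/-- Asymptotics of the propagator entries over `[−t, t]` for the Weber
equation: `U(t)·e^{i(t²−π/2)} → −√2·i` and `V̄(t) → i` as `t → ∞`. -/
theorem weber_propagator_asymptotics
    (xp vp xm vm : ℝ → ℝ)
    (hxp : ∀ t, HasDerivAt xp (vp t) t) (hvp : ∀ t, HasDerivAt vp (-(t ^ 2 * xp t)) t)
    (hxm : ∀ t, HasDerivAt xm (vm t) t) (hvm : ∀ t, HasDerivAt vm (-(t ^ 2 * xm t)) t)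
    (heven : ∀ t, xp (-t) = xp t) (hodd : ∀ t, xm (-t) = -xm t)
    (hW : ∀ t, xp t * vm t - vp t * xm t = 1)
    (U Vb : ℝ → ℂ)
    (hU : ∀ t, U t = -2 * Complex.I * aInst xp vp t * aInst xm vm t)
    (hV : ∀ t, Vb t =
      2 * Complex.I * ((((starRingEnd ℂ) (aInst xp vp t) * aInst xm vm t).re : ℝ) : ℂ)) :
    Tendsto (fun t : ℝ => U t * Complex.exp (Complex.I * ((t : ℂ) ^ 2 - (π : ℂ) / 2)))
      atTop (nhds (-(Real.sqrt 2 : ℂ) * Complex.I)) ∧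
    Tendsto Vb atTop (nhds Complex.I) := by
  obtain ⟨A, B, K, hK, hP, hM⟩ := w_limits xp vp xm vm hxp hvp hxm hvm heven hodd hW
  have hI := Complex.I_sq
  have s2 : (Real.sqrt 2 : ℂ) ^ 2 = 2 := by
    rw [← Complex.ofReal_pow, Real.sq_sqrt two_pos.le]; simp
  have s2' : (Real.sqrt 2 : ℂ) ≠ 0 := by
    intro h; rw [h] at s2; norm_num at s2
  have hI1 : (1 + Complex.I) ≠ 0 := by
    intro h; have := congrArg Complex.re h; simp at this
  set N := Complex.normSq K with hN
  have hKK : (starRingEnd ℂ) K * K = (N : ℂ) := by rw [hN, Complex.normSq_eq_conj_mul_self]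
  have hNv : N = π / Real.sqrt 2 := by
    have h1 : N ^ 2 = (π / Real.sqrt 2) ^ 2 := by
      rw [hN, ← map_pow, hK, map_div₀, Complex.normSq_ofReal, div_pow, Real.sq_sqrt two_pos.le,
        Complex.normSq_apply]
      simp
      norm_num
      ring
    exact (pow_left_inj₀ (Complex.normSq_nonneg K) (by positivity) two_ne_zero).mp h1
  have hNpos : 0 < N := by rw [hNv]; positivity
  -- the sesquilinear product
  have hS : Tendsto (fun t : ℝ => ((A * B : ℝ) : ℂ) *
      ((starRingEnd ℂ) (aInst xp vp t) * aInst xm vm t)) atTop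
      (nhds ((1 + Complex.I) * N / 2)) := by
    have h := ((Complex.continuous_conj.tendsto _).comp hP).mul hM
    convert h using 2 with t
    · have e : (starRingEnd ℂ) (Complex.exp (Complex.I * t ^ 2 / 2)) *
          Complex.exp (Complex.I * t ^ 2 / 2) = 1 := by
        rw [← Complex.exp_conj, ← Complex.exp_add]
        have h2 : (starRingEnd ℂ) 2 = 2 := Complex.conj_ofNat 2
        simp only [map_div₀, map_mul, map_pow, Complex.conj_I, Complex.conj_ofReal, h2]
        rw [← Complex.exp_zero]
        congr 1
        ring
      simp only [Function.comp_apply, map_mul, Complex.conj_ofReal]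
      push_cast
      linear_combination (-(A * B * (starRingEnd ℂ) (aInst xp vp t) * aInst xm vm t) : ℂ) * e
    · simp only [map_mul, map_div₀, map_add, map_one, Complex.conj_I, Complex.conj_ofReal]
      rw [← hKK]
      field_simp
      rw [s2]
      linear_combination (2 * (starRingEnd ℂ) K * K) * hI
  have hIm : ∀ t : ℝ, 0 < t →
      ((starRingEnd ℂ) (aInst xp vp t) * aInst xm vm t).im = 1 / 2 := by
    intro t ht
    have h0 : (starRingEnd ℂ) (aInst xp vp t) * aInst xm vm t =
        (((t ^ 2 * xp t * xm t + vp t * vm t) / (2 * t) : ℝ) : ℂ) +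
          ((1 / 2 : ℝ) : ℂ) * Complex.I := by
      have hs : ((Real.sqrt (2 * t) : ℝ) : ℂ) ^ 2 = 2 * t := by
        rw [← Complex.ofReal_pow, Real.sq_sqrt (by positivity)]; push_cast; ring
      have ht' : (t : ℂ) ≠ 0 := by exact_mod_cast ht.ne'
      have hWc : (xp t * vm t - vp t * xm t : ℂ) = 1 := by exact_mod_cast hW t
      simp only [aInst, map_div₀, map_add, map_mul, Complex.conj_ofReal, Complex.conj_I]
      rw [div_mul_div_comm, ← sq, hs]
      push_cast
      field_simp
      linear_combination (Complex.I * t) * hWc - (vp t * vm t : ℂ) * hI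
    rw [h0, Complex.add_im, Complex.ofReal_im, Complex.im_ofReal_mul, Complex.I_im]
    ring
  have hAB : A * B = N := by
    have h1 := (Complex.continuous_im.tendsto _).comp hS
    have h2 : Tendsto (fun _ : ℝ => A * B * (1 / 2)) atTop
        (nhds (((1 + Complex.I) * N / 2 : ℂ).im)) := by
      refine h1.congr' ?_
      filter_upwards [eventually_gt_atTop 0] with t ht
      rw [Function.comp_apply, Complex.im_ofReal_mul, hIm t ht]
    have h3 := tendsto_nhds_unique h2 tendsto_const_nhds
    have h4 : ((1 + Complex.I) * N / 2 : ℂ).im = N / 2 := by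
      have : ((1 + Complex.I) * N / 2 : ℂ) = ((N / 2 : ℝ) : ℂ) + ((N / 2 : ℝ) : ℂ) * Complex.I := by
        push_cast; ring
      rw [this]; simp
    linarith
  have hNc : (N : ℂ) ≠ 0 := by exact_mod_cast hNpos.ne'
  constructor
  · have h := (hP.mul hM).const_mul (-2 / (N : ℂ))
    convert h using 2 with t
    · rw [hU]
      have e1 : Complex.exp (Complex.I * ((t : ℂ) ^ 2 - (π : ℂ) / 2)) =
          Complex.exp (Complex.I * t ^ 2 / 2) * Complex.exp (Complex.I * t ^ 2 / 2) *
            (-Complex.I) := by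
        rw [← Complex.exp_neg_pi_div_two_mul_I, ← Complex.exp_add, ← Complex.exp_add]
        congr 1; ring
      have hABc : (A * B : ℂ) = N := by exact_mod_cast hAB
      rw [e1]
      generalize Complex.exp (Complex.I * t ^ 2 / 2) = e
      field_simp
      linear_combination (aInst xp vp t * aInst xm vm t * e ^ 2 * N) * hI +
        (aInst xp vp t * aInst xm vm t * e ^ 2) * hABc
    · have hK' : (1 + Complex.I) * K ^ 2 = π := by rw [hK]; field_simp
      have hN' : (N : ℂ) * (Real.sqrt 2 : ℂ) = π := by
        rw [hNv]; push_cast; field_simp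
      have e2 : -2 / (N : ℂ) * ((1 + Complex.I) * K / (Real.sqrt 2 : ℂ) *
          (Complex.I * K / (Real.sqrt 2 : ℂ))) =
          -2 * Complex.I * ((1 + Complex.I) * K ^ 2) / (N * (Real.sqrt 2 : ℂ) ^ 2) := by
        field_simp
      rw [e2, hK', s2, ← hN']
      field_simp
  · have h1 := (Complex.continuous_re.tendsto _).comp hS
    have h2 := ((Complex.continuous_ofReal.tendsto _).comp h1).const_mul (2 * Complex.I / (N : ℂ))
    convert h2 using 2 with t
    · rw [hV, Function.comp_apply, Function.comp_apply, Complex.re_ofReal_mul, hAB]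
      push_cast
      field_simp
    · have h4 : ((1 + Complex.I) * N / 2 : ℂ).re = N / 2 := by
        have : ((1 + Complex.I) * N / 2 : ℂ) =
            ((N / 2 : ℝ) : ℂ) + ((N / 2 : ℝ) : ℂ) * Complex.I := by
          push_cast; ring
        rw [this]; simp
      rw [h4]
      push_cast
      field_simp
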